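/- arXiv:2201.07169 — 5 statements merged into one kernel-verified Lean document; each statement's English description precedes it below -/
import Mathlib

section
/- For every R > 0 there exists a constant C > 0 such that for all x, y ∈ (0, R) with x ≠ y one has |T₁(x,y)| ≤ C·x·y. -/
/-!
Write `F t = 1 / sinh t - 1 / t`, so that `T₁(x,y) = (y/x)·(F |x²−y²| − F (x²+y²))`. The poles at
`0` cancel, and `F` is `1`-Lipschitz on the positive axis:
`F' u = (1 / u² - 1 / sinh² u) - (cosh u - 1) / sinh² u` is a difference of two numbers in `[0, 1]`.
The two arguments of `F` differ by `2 min(x², y²) ≤ 2x²`, which absorbs the factor `1 / x`.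
-/

open MeasureTheory Real Set

/-- `T₁(x,y) = (y/x)·(1/sinh|x²−y²| − 1/|x²−y²| − 1/sinh(x²+y²) + 1/(x²+y²))`. -/
noncomputable def T1 (x y : ℝ) : ℝ :=
  (y / x) * (1 / Real.sinh |x ^ 2 - y ^ 2| - 1 / |x ^ 2 - y ^ 2|
    - 1 / Real.sinh (x ^ 2 + y ^ 2) + 1 / (x ^ 2 + y ^ 2))

theorem abs_le_abs_sinh (u : ℝ) : |u| ≤ |sinh u| := by
  rw [abs_sinh]
  exact self_le_sinh_iff.2 (abs_nonneg u)

theorem abs_sinh_le_abs_mul_cosh (u : ℝ) : |sinh u| ≤ |u| * cosh u := by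
  have hcosh : ∀ t ∈ Metric.closedBall (0 : ℝ) |u|, ‖cosh t‖ ≤ cosh u := fun t ht => by
    rw [norm_of_nonneg (cosh_pos t).le, cosh_le_cosh]
    simpa using ht
  have hmean := (convex_closedBall (0 : ℝ) |u|).norm_image_sub_le_of_norm_hasDerivWithin_le
    (fun t _ => (hasDerivAt_sinh t).hasDerivWithinAt) hcosh
    (Metric.mem_closedBall_self (abs_nonneg u)) (show u ∈ Metric.closedBall 0 |u| by simp)
  simpa [mul_comm] using hmean

theorem one_div_sq_sub_one_div_sinh_sq_mem_Icc {u : ℝ} (hu : u ≠ 0) :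
    1 / u ^ 2 - 1 / sinh u ^ 2 ∈ Icc (0 : ℝ) 1 := by
  have hs : sinh u ≠ 0 := sinh_ne_zero.2 hu
  have hle_sinh : u ^ 2 ≤ sinh u ^ 2 := sq_le_sq.2 (abs_le_abs_sinh u)
  have hsinh_le : sinh u ^ 2 ≤ u ^ 2 * cosh u ^ 2 := by
    rw [← mul_pow, sq_le_sq, abs_mul, abs_of_pos (cosh_pos u)]
    exact abs_sinh_le_abs_mul_cosh u
  refine ⟨sub_nonneg.2 (by gcongr), sub_le_iff_le_add.2 ?_⟩
  calc 1 / u ^ 2 ≤ cosh u ^ 2 / sinh u ^ 2 := by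
        rw [div_le_div_iff₀ (by positivity) (by positivity)]
        linarith
    _ = 1 + 1 / sinh u ^ 2 := by
        rw [cosh_sq]
        field_simp

theorem cosh_sub_one_div_sinh_sq_mem_Icc (u : ℝ) :
    (cosh u - 1) / sinh u ^ 2 ∈ Icc (0 : ℝ) 1 := by
  have hc : 0 ≤ cosh u - 1 := sub_nonneg.2 (one_le_cosh u)
  refine ⟨by positivity, div_le_one_of_le₀ ?_ (by positivity)⟩
  calc cosh u - 1 ≤ (cosh u - 1) * (cosh u + 1) :=
        le_mul_of_one_le_right hc (by linarith)
    _ = sinh u ^ 2 := by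
        rw [sinh_sq]
        ring

/-- The hyperbolic cosecant with its simple pole at `0` removed. At `0` it takes the junk value `0`,
which is also its limit there. -/
noncomputable def regularizedCsch (t : ℝ) : ℝ :=
  1 / sinh t - 1 / t

theorem hasDerivAt_regularizedCsch {u : ℝ} (hu : u ≠ 0) :
    HasDerivAt regularizedCsch (1 / u ^ 2 - cosh u / sinh u ^ 2) u := by
  unfold regularizedCsch
  simp only [one_div]
  refine (((hasDerivAt_sinh u).inv (sinh_ne_zero.2 hu)).sub (hasDerivAt_inv hu)).congr_deriv ?_
  ring

theorem abs_one_div_sq_sub_cosh_div_sinh_sq_le_one {u : ℝ} (hu : u ≠ 0) :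
    |1 / u ^ 2 - cosh u / sinh u ^ 2| ≤ 1 := by
  obtain ⟨ha₀, ha₁⟩ := one_div_sq_sub_one_div_sinh_sq_mem_Icc hu
  obtain ⟨hb₀, hb₁⟩ := cosh_sub_one_div_sinh_sq_mem_Icc u
  calc |1 / u ^ 2 - cosh u / sinh u ^ 2|
      = |(1 / u ^ 2 - 1 / sinh u ^ 2) - (cosh u - 1) / sinh u ^ 2| := by
        congr 1
        ring
    _ ≤ 1 := abs_sub_le_of_nonneg_of_le ha₀ ha₁ hb₀ hb₁

theorem lipschitzOnWith_regularizedCsch : LipschitzOnWith 1 regularizedCsch (Ioi 0) :=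
  (convex_Ioi 0).lipschitzOnWith_of_nnnorm_hasDerivWithin_le
    (fun _ ht => (hasDerivAt_regularizedCsch (ne_of_gt ht)).hasDerivWithinAt)
    fun _ ht => abs_one_div_sq_sub_cosh_div_sinh_sq_le_one (ne_of_gt ht)

theorem T1_eq_div_mul_regularizedCsch_sub (x y : ℝ) :
    T1 x y = y / x * (regularizedCsch |x ^ 2 - y ^ 2| - regularizedCsch (x ^ 2 + y ^ 2)) := by
  unfold T1 regularizedCsch
  ring

theorem abs_abs_sub_sub_add_eq_two_nsmul_min {α : Type*} [AddCommGroup α] [LinearOrder α]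
    [IsOrderedAddMonoid α] {a b : α} (ha : 0 ≤ a) (hb : 0 ≤ b) :
    |(|a - b|) - (a + b)| = 2 • min a b := by
  rw [abs_sub_comm, abs_sub_comm a, ← two_nsmul_inf_eq_add_sub_abs_sub]
  exact abs_of_nonneg (nsmul_nonneg (le_min ha hb) 2)

theorem T1_bound_small_general {x y : ℝ} (hx : x ≠ 0) (hxy : |x| ≠ |y|) :
    |T1 x y| ≤ 2 * |x| * |y| := by
  have hdiff : 0 < |x ^ 2 - y ^ 2| :=
    abs_pos.2 (sub_ne_zero.2 fun h => hxy ((sq_eq_sq_iff_abs_eq_abs x y).1 h))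
  have hsum : 0 < x ^ 2 + y ^ 2 := by positivity
  have hlip : |regularizedCsch |x ^ 2 - y ^ 2| - regularizedCsch (x ^ 2 + y ^ 2)| ≤
      |(|x ^ 2 - y ^ 2|) - (x ^ 2 + y ^ 2)| := by
    simpa [Real.dist_eq] using lipschitzOnWith_regularizedCsch.dist_le_mul _ hdiff _ hsum
  have hgap : |(|x ^ 2 - y ^ 2|) - (x ^ 2 + y ^ 2)| ≤ 2 * x ^ 2 := by
    rw [abs_abs_sub_sub_add_eq_two_nsmul_min (sq_nonneg x) (sq_nonneg y), nsmul_eq_mul,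
      Nat.cast_ofNat]
    gcongr
    exact min_le_left _ _
  calc |T1 x y|
      = |y| / |x| * |regularizedCsch |x ^ 2 - y ^ 2| - regularizedCsch (x ^ 2 + y ^ 2)| := by
        rw [T1_eq_div_mul_regularizedCsch_sub, abs_mul, abs_div]
    _ ≤ |y| / |x| * (2 * x ^ 2) := by
        gcongr
        exact hlip.trans hgap
    _ = 2 * |x| * |y| := by
        rw [← sq_abs x]
        field_simp

theorem T1_bound_small (R : ℝ) (hR : 0 < R) :
    ∃ C : ℝ, 0 < C ∧ ∀ x y : ℝ, x ∈ Set.Ioo (0 : ℝ) R → y ∈ Set.Ioo (0 : ℝ) R →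
      x ≠ y → |T1 x y| ≤ C * x * y := by
  refine ⟨2, two_pos, fun x y ⟨hx, _⟩ ⟨hy, _⟩ hxy => ?_⟩
  simpa only [abs_of_pos hx, abs_of_pos hy] using
    T1_bound_small_general hx.ne' (y := y) (by rwa [abs_of_pos hx, abs_of_pos hy])
end

section
/- There exists a constant C > 0 such that for all x, y > 0 with x + y > 1, |x − y| ≤ 1/8 and x ≠ y, one has |T₁(x,y)| ≤ C. -/
open MeasureTheory Real Set

/-! The singularities of `1 / sinh t` and `1 / t` at `0` cancel: the difference `1 / t - 1 / sinh t`
stays in `[0, 1]` for all `t > 0`. The bracket in `T1` is a difference of two such values, so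
`|T1 x y| ≤ |y / x|`, and near the diagonal, away from the origin, `y / x` is bounded. -/

lemma exp_neg_mul_sinh_le_self (t : ℝ) : exp (-t) * sinh t ≤ t :=
  calc exp (-t) * sinh t
      = (1 - exp (-(2 * t))) / 2 := by
        rw [sinh_eq, mul_div_assoc', mul_sub, ← exp_add, ← exp_add, neg_add_cancel, exp_zero,
          ← neg_add, ← two_mul]
    _ ≤ t := by linarith [one_sub_le_exp_neg (2 * t)]

lemma one_div_sub_one_div_sinh_nonneg {t : ℝ} (ht : 0 < t) : 0 ≤ 1 / t - 1 / sinh t :=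
  sub_nonneg.2 (one_div_le_one_div_of_le ht (self_le_sinh_iff.2 ht.le))

lemma one_div_sub_one_div_sinh_le_one {t : ℝ} (ht : 0 < t) : 1 / t - 1 / sinh t ≤ 1 := by
  have hsinh : 0 < sinh t := sinh_pos_iff.2 ht
  have hmul : (1 - t) * sinh t ≤ t :=
    calc (1 - t) * sinh t ≤ exp (-t) * sinh t := by gcongr; exact one_sub_le_exp_neg t
      _ ≤ t := exp_neg_mul_sinh_le_self t
  rw [div_sub_div _ _ ht.ne' hsinh.ne', div_le_one (mul_pos ht hsinh)]
  linarith

lemma one_div_sub_one_div_sinh_mem_Icc {t : ℝ} (ht : 0 < t) :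
    1 / t - 1 / sinh t ∈ Icc (0 : ℝ) 1 :=
  ⟨one_div_sub_one_div_sinh_nonneg ht, one_div_sub_one_div_sinh_le_one ht⟩

lemma div_le_add_div_sub_of_abs_sub_le {a b x y : ℝ} (hba : b < a) (hsum : a ≤ x + y)
    (hdiff : |x - y| ≤ b) : y / x ≤ (a + b) / (a - b) := by
  have hb : 0 ≤ b := (abs_nonneg _).trans hdiff
  have hyx : y - x ≤ b := by linarith [neg_le_of_abs_le hdiff]
  have hx : 0 < x := by linarith
  have hcross : a * (y - x) ≤ b * (x + y) :=
    calc a * (y - x) ≤ a * b := mul_le_mul_of_nonneg_left hyx (hb.trans hba.le)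
      _ = b * a := mul_comm a b
      _ ≤ b * (x + y) := mul_le_mul_of_nonneg_left hsum hb
  rw [div_le_div_iff₀ hx (sub_pos.2 hba)]
  linarith

theorem T1_bound_near_diagonal_general {x y : ℝ} (hx : x ≠ 0) (hxy : x ^ 2 ≠ y ^ 2) :
    |T1 x y| ≤ |y / x| := by
  set d := |x ^ 2 - y ^ 2| with hd
  set s := x ^ 2 + y ^ 2 with hs
  have hd_pos : 0 < d := abs_pos.2 (sub_ne_zero.2 hxy)
  have hs_pos : 0 < s := by positivity
  have hbracket : |(1 / s - 1 / sinh s) - (1 / d - 1 / sinh d)| ≤ 1 :=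
    Real.dist_le_of_mem_Icc_01 (one_div_sub_one_div_sinh_mem_Icc hs_pos)
      (one_div_sub_one_div_sinh_mem_Icc hd_pos)
  calc |T1 x y| = |y / x| * |(1 / s - 1 / sinh s) - (1 / d - 1 / sinh d)| := by
        rw [T1, ← hd, ← hs, ← abs_mul]; ring_nf
    _ ≤ |y / x| := mul_le_of_le_one_right (abs_nonneg _) hbracket

theorem T1_bound_near_diagonal :
    ∃ C : ℝ, 0 < C ∧ ∀ x y : ℝ, 0 < x → 0 < y → 1 < x + y → |x - y| ≤ 1 / 8 →
      x ≠ y → |T1 x y| ≤ C := by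
  refine ⟨(1 + 1 / 8) / (1 - 1 / 8), by norm_num, fun x y hx hy hsum hdiff hne ↦ ?_⟩
  have hsq : x ^ 2 ≠ y ^ 2 := (sq_eq_sq₀ hx.le hy.le).not.2 hne
  calc |T1 x y| ≤ |y / x| := T1_bound_near_diagonal_general hx.ne' hsq
    _ = y / x := abs_of_pos (div_pos hy hx)
    _ ≤ (1 + 1 / 8) / (1 - 1 / 8) :=
      div_le_add_div_sub_of_abs_sub_le (by norm_num) hsum.le hdiff
end

section
/- There exists a constant C > 0 such that for every x ∈ (0,1) and every y > min(2, 3x/2) one has |T₁(x,y)| ≤ C·x/y³. -/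
open MeasureTheory Real Set

/-!
The terms of `T₁` are the values at `|x² - y²|` and `x² + y²` of `g u = 1 / sinh u - 1 / u`.
From `sinh² u = (cosh u - 1) (cosh u + 1)` and `cosh u - 1 ≥ u² / 2` one gets
`cosh u / sinh² u ≤ 2 / u²`, hence `|g' u| ≤ 1 / u²`: the increments of `g` are dominated by
those of `1 / u`. For `0 < x < y` this gives `|T₁(x,y)| ≤ 2xy / (y⁴ - x⁴)`, which is of order
`x / y³` as long as `y / x` stays away from `1`.
-/

theorem sq_le_sinh_sq (u : ℝ) : u ^ 2 ≤ sinh u ^ 2 := by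
  rw [sq_le_sq, abs_sinh]
  exact self_le_sinh_iff.2 (abs_nonneg u)

theorem one_add_sq_div_two_le_cosh (u : ℝ) : 1 + u ^ 2 / 2 ≤ cosh u := by
  calc 1 + u ^ 2 / 2
      = 1 + 2 * (u / 2) ^ 2 := by ring
    _ ≤ 1 + 2 * sinh (u / 2) ^ 2 := by linarith [sq_le_sinh_sq (u / 2)]
    _ = cosh (2 * (u / 2)) := by rw [cosh_two_mul, cosh_sq]; ring
    _ = cosh u := by rw [mul_div_cancel₀ u two_ne_zero]

theorem sq_mul_cosh_le_two_mul_sinh_sq (u : ℝ) : u ^ 2 * cosh u ≤ 2 * sinh u ^ 2 := by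
  have hcosh : u ^ 2 ≤ 2 * (cosh u - 1) := by linarith [one_add_sq_div_two_le_cosh u]
  calc u ^ 2 * cosh u
      ≤ u ^ 2 * (cosh u + 1) := by gcongr; linarith
    _ ≤ 2 * (cosh u - 1) * (cosh u + 1) :=
        mul_le_mul_of_nonneg_right hcosh (by linarith [cosh_pos u])
    _ = 2 * sinh u ^ 2 := by rw [sinh_sq]; ring

theorem antitoneOn_inv_sinh : AntitoneOn (fun u ↦ (sinh u)⁻¹) (Ioi 0) :=
  fun _ ha _ _ hab ↦ inv_anti₀ (sinh_pos_iff.2 ha) (sinh_le_sinh.2 hab)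

theorem hasDerivAt_inv_sinh_sub_two_mul_inv {u : ℝ} (hu : u ≠ 0) :
    HasDerivAt (fun u ↦ (sinh u)⁻¹ - 2 * u⁻¹) (2 / u ^ 2 - cosh u / sinh u ^ 2) u :=
  (((hasDerivAt_sinh u).fun_inv (sinh_ne_zero.2 hu)).sub
    ((hasDerivAt_inv hu).const_mul 2)).congr_deriv (by ring)

theorem monotoneOn_inv_sinh_sub_two_mul_inv :
    MonotoneOn (fun u ↦ (sinh u)⁻¹ - 2 * u⁻¹) (Ioi 0) := by
  have hderiv (u : ℝ) (hu : u ∈ Ioi 0) := hasDerivAt_inv_sinh_sub_two_mul_inv (ne_of_gt hu)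
  refine monotoneOn_of_hasDerivWithinAt_nonneg (convex_Ioi 0)
    (fun u hu ↦ (hderiv u hu).continuousAt.continuousWithinAt)
    (fun u hu ↦ (hderiv u (interior_subset hu)).hasDerivWithinAt) fun u hu ↦ ?_
  have hu0 : 0 < u := interior_subset hu
  have hsinh : 0 < sinh u ^ 2 := pow_pos (sinh_pos_iff.2 hu0) 2
  rw [sub_nonneg, div_le_div_iff₀ hsinh (pow_pos hu0 2), mul_comm]
  exact sq_mul_cosh_le_two_mul_sinh_sq u

theorem abs_inv_sinh_sub_inv_sub_le {a b : ℝ} (ha : 0 < a) (hab : a ≤ b) :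
    |((sinh a)⁻¹ - a⁻¹) - ((sinh b)⁻¹ - b⁻¹)| ≤ a⁻¹ - b⁻¹ := by
  have hb : 0 < b := ha.trans_le hab
  have hanti : (sinh b)⁻¹ ≤ (sinh a)⁻¹ := antitoneOn_inv_sinh ha hb hab
  have hmono : (sinh a)⁻¹ - 2 * a⁻¹ ≤ (sinh b)⁻¹ - 2 * b⁻¹ :=
    monotoneOn_inv_sinh_sub_two_mul_inv ha hb hab
  rw [abs_le]
  constructor <;> linarith

theorem abs_T1_le {x y : ℝ} (hx : 0 < x) (hy : 0 < y) (hxy : x ≠ y) :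
    |T1 x y| ≤ y / x * (|x ^ 2 - y ^ 2|⁻¹ - (x ^ 2 + y ^ 2)⁻¹) := by
  have hne : x ^ 2 ≠ y ^ 2 := mt (sq_eq_sq₀ hx.le hy.le).1 hxy
  have hpos : 0 < |x ^ 2 - y ^ 2| := abs_pos.2 (sub_ne_zero.2 hne)
  have hle : |x ^ 2 - y ^ 2| ≤ x ^ 2 + y ^ 2 := by
    rw [abs_le]
    constructor <;> linarith [sq_nonneg x, sq_nonneg y]
  rw [T1, abs_mul, abs_of_pos (div_pos hy hx), sub_add]
  simp only [one_div]
  gcongr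
  exact abs_inv_sinh_sub_inv_sub_le hpos hle

theorem abs_T1_le_of_lt {x y : ℝ} (hx : 0 < x) (hxy : x < y) :
    |T1 x y| ≤ 2 * x * y / (y ^ 4 - x ^ 4) := by
  have hdiff : 0 < y ^ 2 - x ^ 2 := sub_pos.2 (pow_lt_pow_left₀ hxy hx.le two_ne_zero)
  calc |T1 x y|
      ≤ y / x * (|x ^ 2 - y ^ 2|⁻¹ - (x ^ 2 + y ^ 2)⁻¹) := abs_T1_le hx (hx.trans hxy) hxy.ne
    _ = y / x * ((y ^ 2 - x ^ 2)⁻¹ - (x ^ 2 + y ^ 2)⁻¹) := by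
        rw [abs_sub_comm, abs_of_pos hdiff]
    _ = 2 * x * y / ((y ^ 2 - x ^ 2) * (x ^ 2 + y ^ 2)) := by field_simp; ring
    _ = 2 * x * y / (y ^ 4 - x ^ 4) := by ring

theorem T1_bound_far_general {r x y : ℝ} (hr : 1 < r) (hx : 0 < x) (hxy : r * x ≤ y) :
    |T1 x y| ≤ 2 * r ^ 4 / (r ^ 4 - 1) * x / y ^ 3 := by
  have hlt : x < y := (lt_mul_of_one_lt_left hx hr).trans_le hxy
  have hy : 0 < y := hx.trans hlt
  have hr4 : 0 < r ^ 4 - 1 := sub_pos.2 (one_lt_pow₀ hr four_ne_zero)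
  have hpow : r ^ 4 * x ^ 4 ≤ y ^ 4 := by
    rw [← mul_pow]
    gcongr
  have hgap : (r ^ 4 - 1) / r ^ 4 * y ^ 4 ≤ y ^ 4 - x ^ 4 := by
    rw [div_mul_eq_mul_div, div_le_iff₀ (by positivity)]
    linarith
  calc |T1 x y|
      ≤ 2 * x * y / (y ^ 4 - x ^ 4) := abs_T1_le_of_lt hx hlt
    _ ≤ 2 * x * y / ((r ^ 4 - 1) / r ^ 4 * y ^ 4) := by gcongr
    _ = 2 * r ^ 4 / (r ^ 4 - 1) * x / y ^ 3 := by field_simp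

theorem T1_bound_far :
    ∃ C : ℝ, 0 < C ∧ ∀ x y : ℝ, x ∈ Set.Ioo (0 : ℝ) 1 → min 2 (3 * x / 2) < y →
      |T1 x y| ≤ C * x / y ^ 3 := by
  refine ⟨2 * (3 / 2) ^ 4 / ((3 / 2) ^ 4 - 1), by norm_num, fun x y ⟨hx0, hx1⟩ hy ↦ ?_⟩
  rw [min_eq_right (by linarith)] at hy
  exact T1_bound_far_general (by norm_num) hx0 (by linarith)
end

section
/- There exists a constant C > 0 such that for every x > 1 and every y with 0 < y < x/2 one has |T₁(x,y)| ≤ C·(y/x)·( 1/sinh(3x²/4) + y²/x⁴ ). -/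
open MeasureTheory Real Set

/-!
With `a = x² - y²` and `b = x² + y²`, the second factor of `T₁` is the difference of the two
nonnegative numbers `1 / sinh a - 1 / sinh b` and `1 / a - 1 / b`, so no cancellation between them
is needed. The first is at most `1 / sinh a`, the second equals `2y² / (x⁴ - y⁴)`, and in a sector
`y² ≤ q x²` with `q < 1` both `a / x²` and `(x⁴ - y⁴) / x⁴` stay away from zero.
-/

lemma one_div_sinh_le_one_div_sinh {a b : ℝ} (ha : 0 < a) (hab : a ≤ b) :
    1 / sinh b ≤ 1 / sinh a :=
  one_div_le_one_div_of_le (sinh_pos_iff.mpr ha) (sinh_le_sinh.mpr hab)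

lemma abs_one_div_sinh_sub_one_div_sub_le_max {a b : ℝ} (ha : 0 < a) (hab : a ≤ b) :
    |1 / sinh a - 1 / a - 1 / sinh b + 1 / b| ≤ max (1 / sinh a) (1 / a - 1 / b) := by
  have hsinh : 1 / sinh b ≤ 1 / sinh a := one_div_sinh_le_one_div_sinh ha hab
  have hinv : 1 / b ≤ 1 / a := one_div_le_one_div_of_le ha hab
  have hb : 0 < 1 / sinh b := one_div_pos.mpr (sinh_pos_iff.mpr (ha.trans_le hab))
  calc |1 / sinh a - 1 / a - 1 / sinh b + 1 / b|
      = |(1 / sinh a - 1 / sinh b) - (1 / a - 1 / b)| := by ring_nf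
    _ ≤ max (1 / sinh a - 1 / sinh b) (1 / a - 1 / b) :=
        abs_sub_le_iff.mpr
          ⟨(sub_le_self _ (sub_nonneg.mpr hinv)).trans (le_max_left _ _),
            (sub_le_self _ (sub_nonneg.mpr hsinh)).trans (le_max_right _ _)⟩
    _ ≤ max (1 / sinh a) (1 / a - 1 / b) := max_le_max_right _ (sub_le_self _ hb.le)

lemma one_div_sub_sub_one_div_add_le {q u v : ℝ} (hu : 0 < u) (hv : 0 ≤ v) (hq : q < 1)
    (hvu : v ≤ q * u) :
    1 / (u - v) - 1 / (u + v) ≤ 2 / (1 - q ^ 2) * (v / u ^ 2) := by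
  have hq₀ : 0 ≤ q := nonneg_of_mul_nonneg_left (hv.trans hvu) hu
  have hq₂ : 0 < 1 - q ^ 2 := sub_pos.mpr (pow_lt_one₀ hq₀ hq two_ne_zero)
  have hlt : 0 < u - v := sub_pos.mpr (hvu.trans_lt (mul_lt_of_lt_one_left hu hq))
  have hsq : (1 - q ^ 2) * u ^ 2 ≤ u ^ 2 - v ^ 2 := by
    have : v ^ 2 ≤ (q * u) ^ 2 := pow_le_pow_left₀ hv hvu 2
    linarith [mul_pow q u 2]
  calc 1 / (u - v) - 1 / (u + v)
      = 2 * v / (u ^ 2 - v ^ 2) := by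
        rw [div_sub_div _ _ hlt.ne' (by positivity)]
        ring_nf
    _ ≤ 2 * v / ((1 - q ^ 2) * u ^ 2) :=
        div_le_div_of_nonneg_left (by positivity) (by positivity) hsq
    _ = 2 / (1 - q ^ 2) * (v / u ^ 2) := mul_div_mul_comm ..

theorem T1_bound_below_diagonal_general {q x y : ℝ} (hx : x ≠ 0) (hq : q < 1)
    (hyx : y ^ 2 ≤ q * x ^ 2) :
    |T1 x y| ≤
      2 / (1 - q ^ 2) * |y / x| * (1 / sinh ((1 - q) * x ^ 2) + y ^ 2 / x ^ 4) := by
  have hx₂ : 0 < x ^ 2 := by positivity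
  have hq₀ : 0 ≤ q := nonneg_of_mul_nonneg_left ((sq_nonneg y).trans hyx) hx₂
  have hC : 1 ≤ 2 / (1 - q ^ 2) := by
    rw [one_le_div (sub_pos.mpr (pow_lt_one₀ hq₀ hq two_ne_zero))]
    linarith [sq_nonneg q]
  have hqx : 0 < (1 - q) * x ^ 2 := mul_pos (sub_pos.mpr hq) hx₂
  have ha : (1 - q) * x ^ 2 ≤ x ^ 2 - y ^ 2 := by linarith
  have hab : x ^ 2 - y ^ 2 ≤ x ^ 2 + y ^ 2 := by linarith [sq_nonneg y]
  have hS : 0 < 1 / sinh ((1 - q) * x ^ 2) := one_div_pos.mpr (sinh_pos_iff.mpr hqx)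
  have hsinh : 1 / sinh (x ^ 2 - y ^ 2) ≤ 2 / (1 - q ^ 2) * (1 / sinh ((1 - q) * x ^ 2)) :=
    (one_div_sinh_le_one_div_sinh hqx ha).trans (le_mul_of_one_le_left hS.le hC)
  have hinv : 1 / (x ^ 2 - y ^ 2) - 1 / (x ^ 2 + y ^ 2) ≤ 2 / (1 - q ^ 2) * (y ^ 2 / x ^ 4) := by
    simpa only [← pow_mul] using one_div_sub_sub_one_div_add_le hx₂ (sq_nonneg y) hq hyx
  rw [T1, abs_of_pos (hqx.trans_le ha), abs_mul, mul_comm (2 / _), mul_assoc, mul_add]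
  refine mul_le_mul_of_nonneg_left ?_ (abs_nonneg _)
  exact (abs_one_div_sinh_sub_one_div_sub_le_max (hqx.trans_le ha) hab).trans <|
    (max_le_max hsinh hinv).trans (max_le_add_of_nonneg (by positivity) (by positivity))

theorem T1_bound_below_diagonal :
    ∃ C : ℝ, 0 < C ∧ ∀ x y : ℝ, 1 < x → 0 < y → y < x / 2 →
      |T1 x y| ≤ C * (y / x) * (1 / Real.sinh (3 * x ^ 2 / 4) + y ^ 2 / x ^ 4) := by
  refine ⟨2 / (1 - (1 / 4) ^ 2), by norm_num, fun x y hx hy hyx => ?_⟩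
  have hx₀ : 0 < x := zero_lt_one.trans hx
  have hyx₂ : y ^ 2 ≤ 1 / 4 * x ^ 2 := by
    linarith [pow_le_pow_left₀ hy.le hyx.le 2, div_pow x 2 2]
  have hxx : 3 * x ^ 2 / 4 = (1 - 1 / 4) * x ^ 2 := by ring
  simpa only [hxx, abs_of_pos (div_pos hy hx₀)] using
    T1_bound_below_diagonal_general hx₀.ne' (by norm_num) hyx₂
end

section
/- For every R > 0 there exists a constant C > 0 such that for all x, y ∈ (0, R) with x ≠ y one has |T₂(x,y)| ≤ C. -/
open MeasureTheory Real Set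

/-- `T₂(x,y) = (y³/x³)·(sinh(x²)/sinh(y²) − x²/y²)·(1/sinh|x²−y²| − 1/sinh(x²+y²))`. -/
noncomputable def T2 (x y : ℝ) : ℝ :=
  (y ^ 3 / x ^ 3) * (Real.sinh (x ^ 2) / Real.sinh (y ^ 2) - x ^ 2 / y ^ 2) *
    (1 / Real.sinh |x ^ 2 - y ^ 2| - 1 / Real.sinh (x ^ 2 + y ^ 2))

/-!
The bound holds with `C = 2`, whatever `R` is. For `0 < b < a`,
`0 ≤ sinh a - (a / b) sinh b ≤ cosh a - cosh b`,
while `sinh (a - b) sinh (a + b) = cosh² a - cosh² b` gives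
`1 / sinh (a - b) - 1 / sinh (a + b) = 2 cosh a sinh b / ((cosh a - cosh b) (cosh a + cosh b))`.
In the product of the two the singular factor `cosh a - cosh b` cancels, which leaves at most
`2 sinh b`. With `{a, b} = {x², y²}`, the powers of `y / x` that remain in `T2 x y` have modulus at
most one.
-/

theorem convexOn_sinh : ConvexOn ℝ (Ici 0) sinh := by
  refine MonotoneOn.convexOn_of_deriv (convex_Ici 0) continuous_sinh.continuousOn
    differentiable_sinh.differentiableOn ?_
  rw [Real.deriv_sinh]
  exact cosh_strictMonoOn.monotoneOn.mono interior_subset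

theorem monotoneOn_sinh_div_self : MonotoneOn (fun t => sinh t / t) (Ioi 0) := by
  intro b hb a ha hab
  simpa using convexOn_sinh.secant_mono self_mem_Ici (mem_Ici_of_Ioi hb) (mem_Ici_of_Ioi ha)
    (ne_of_gt hb) (ne_of_gt ha) hab

theorem monotoneOn_add_exp_neg : MonotoneOn (fun t => t + exp (-t)) (Ici 0) := by
  intro b hb a _ hab
  have hexp : exp (-a) = exp (-b) * exp (b - a) := by rw [← exp_add]; ring_nf
  have hb_le : exp (-b) ≤ 1 := exp_le_one_iff.2 (neg_nonpos.2 hb)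
  have htangent : b - a + 1 ≤ exp (b - a) := add_one_le_exp _
  dsimp only
  nlinarith [exp_pos (-b)]

theorem div_mul_sinh_le_sinh {a b : ℝ} (hb : 0 < b) (hab : b ≤ a) :
    a / b * sinh b ≤ sinh a := by
  have ha : 0 < a := hb.trans_le hab
  calc a / b * sinh b = a * (sinh b / b) := by ring
    _ ≤ a * (sinh a / a) :=
        mul_le_mul_of_nonneg_left (monotoneOn_sinh_div_self hb ha hab) ha.le
    _ = sinh a := mul_div_cancel₀ _ ha.ne'

theorem sinh_sub_div_mul_sinh_le {a b : ℝ} (hb : 0 < b) (hab : b ≤ a) :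
    sinh a - a / b * sinh b ≤ cosh a - cosh b := by
  have hmono : b + exp (-b) ≤ a + exp (-a) :=
    monotoneOn_add_exp_neg hb.le (hb.le.trans hab) hab
  have hslope : a - b ≤ a / b * sinh b - sinh b :=
    calc a - b = (a / b - 1) * b := by field_simp
      _ ≤ (a / b - 1) * sinh b := by
        gcongr
        · exact sub_nonneg.2 ((one_le_div hb).2 hab)
        · exact self_le_sinh_iff.2 hb.le
      _ = _ := by ring
  linarith [cosh_sub_sinh a, cosh_sub_sinh b]

theorem sinh_sub_mul_sinh_add (a b : ℝ) :
    sinh (a - b) * sinh (a + b) = (cosh a - cosh b) * (cosh a + cosh b) := by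
  rw [sinh_sub, sinh_add]
  linear_combination cosh b ^ 2 * sinh_sq a - cosh a ^ 2 * sinh_sq b

theorem one_div_sinh_sub_sub_one_div_sinh_add {a b : ℝ} (hsub : a - b ≠ 0) (hadd : a + b ≠ 0) :
    1 / sinh (a - b) - 1 / sinh (a + b) =
      2 * cosh a * sinh b / ((cosh a - cosh b) * (cosh a + cosh b)) := by
  rw [div_sub_div _ _ (sinh_ne_zero.2 hsub) (sinh_ne_zero.2 hadd), sinh_sub_mul_sinh_add,
    sinh_sub, sinh_add]
  ring

theorem abs_sinh_sub_mul_one_div_sinh_sub_le {a b : ℝ} (hb : 0 < b) (hab : b < a) :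
    |(sinh a - a / b * sinh b) * (1 / sinh (a - b) - 1 / sinh (a + b))| ≤ 2 * sinh b := by
  have hcosh : 0 < cosh a - cosh b :=
    sub_pos.2 (cosh_strictMonoOn hb.le (hb.trans hab).le hab)
  have hdefect : 0 ≤ sinh a - a / b * sinh b := sub_nonneg.2 (div_mul_sinh_le_sinh hb hab.le)
  rw [one_div_sinh_sub_sub_one_div_sinh_add (by linarith) (by linarith),
    abs_of_nonneg (by positivity)]
  calc (sinh a - a / b * sinh b) *
        (2 * cosh a * sinh b / ((cosh a - cosh b) * (cosh a + cosh b)))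
      ≤ (cosh a - cosh b) *
        (2 * cosh a * sinh b / ((cosh a - cosh b) * (cosh a + cosh b))) :=
        mul_le_mul_of_nonneg_right (sinh_sub_div_mul_sinh_le hb hab.le) (by positivity)
    _ = 2 * sinh b * (cosh a / (cosh a + cosh b)) := by field_simp
    _ ≤ 2 * sinh b * 1 := by
        gcongr
        exact div_le_one_of_le₀ (by linarith [cosh_pos b]) (by positivity)
    _ = 2 * sinh b := mul_one _

theorem abs_sinh_div_sinh_sub_div_mul_le_two {a b : ℝ} (hb : 0 < b) (hab : b < a) :
    |(sinh a / sinh b - a / b) * (1 / sinh |a - b| - 1 / sinh (a + b))| ≤ 2 := by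
  have hsinh : 0 < sinh b := sinh_pos_iff.2 hb
  have hfactor : sinh a / sinh b - a / b = (sinh b)⁻¹ * (sinh a - a / b * sinh b) := by
    field_simp
  rw [abs_of_pos (sub_pos.2 hab), hfactor, mul_assoc, abs_mul, abs_of_pos (inv_pos.2 hsinh),
    inv_mul_le_iff₀ hsinh, mul_comm (sinh b)]
  exact abs_sinh_sub_mul_one_div_sinh_sub_le hb hab

theorem abs_sinh_div_sinh_sub_div_mul_le_sq {a b : ℝ} (ha : 0 < a) (hab : a < b) :
    |(sinh a / sinh b - a / b) * (1 / sinh |a - b| - 1 / sinh (a + b))| ≤ 2 * (a / b) ^ 2 := by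
  have hb : 0 < b := ha.trans hab
  have hsinh : 0 < sinh b := sinh_pos_iff.2 hb
  have hfactor : sinh a / sinh b - a / b =
      -(a / b / sinh b) * (sinh b - b / a * sinh a) := by
    field_simp
    ring
  have hratio : sinh a / sinh b ≤ a / b :=
    calc sinh a / sinh b = a / b * (b / a * sinh a) / sinh b := by field_simp
      _ ≤ a / b * sinh b / sinh b := by
        gcongr
        exact div_mul_sinh_le_sinh ha hab.le
      _ = a / b := mul_div_cancel_right₀ _ hsinh.ne'
  rw [abs_sub_comm, abs_of_pos (sub_pos.2 hab), hfactor, mul_assoc, abs_mul, abs_neg,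
    abs_of_pos (by positivity), add_comm]
  calc a / b / sinh b *
        |(sinh b - b / a * sinh a) * (1 / sinh (b - a) - 1 / sinh (b + a))|
      ≤ a / b / sinh b * (2 * sinh a) := by
        gcongr
        exact abs_sinh_sub_mul_one_div_sinh_sub_le ha hab
    _ = 2 * (a / b) * (sinh a / sinh b) := by ring
    _ ≤ 2 * (a / b) * (a / b) := by gcongr
    _ = 2 * (a / b) ^ 2 := by ring

theorem T2_bound_small_general {x y : ℝ} (hx : x ≠ 0) (hy : y ≠ 0) (hxy : |x| ≠ |y|) :
    |T2 x y| ≤ 2 := by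
  rw [T2, mul_assoc, abs_mul, ← div_pow, abs_pow, abs_div]
  rcases hxy.lt_or_gt with hlt | hgt
  · calc (|y| / |x|) ^ 3 * _ ≤ (|y| / |x|) ^ 3 * (2 * (x ^ 2 / y ^ 2) ^ 2) := by
          gcongr
          exact abs_sinh_div_sinh_sub_div_mul_le_sq (by positivity) (sq_lt_sq.2 hlt)
      _ = 2 * (|x| / |y|) := by
          rw [← sq_abs x, ← sq_abs y]
          field_simp
      _ ≤ 2 * 1 := by
          gcongr
          exact div_le_one_of_le₀ hlt.le (abs_nonneg y)
      _ = 2 := mul_one 2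
  · calc (|y| / |x|) ^ 3 * _ ≤ 1 ^ 3 * 2 := by
          gcongr
          · exact div_le_one_of_le₀ hgt.le (abs_nonneg x)
          · exact abs_sinh_div_sinh_sub_div_mul_le_two (by positivity) (sq_lt_sq.2 hgt)
      _ = 2 := by norm_num

theorem T2_bound_small (R : ℝ) (hR : 0 < R) :
    ∃ C : ℝ, 0 < C ∧ ∀ x y : ℝ, x ∈ Set.Ioo (0 : ℝ) R → y ∈ Set.Ioo (0 : ℝ) R →
      x ≠ y → |T2 x y| ≤ C := by
  refine ⟨2, two_pos, fun x y hx hy hxy => T2_bound_small_general hx.1.ne' hy.1.ne' ?_⟩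
  rwa [abs_of_pos hx.1, abs_of_pos hy.1]
end
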